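/- Fix integers n ≥ 1 and k ≥ 1. For all integers i ≥ 1 and 1 ≤ j ≤ k, one has ∫_{[0, 2^{−j−k(i−1)})^n} w_k dx = 2^{(k−j)n} · ∫_{Q_1^i(k)} w_k dx = 2^{(k−j)n} (2^{(k−1)n}+1)^{−i}. -/

import Mathlib

open MeasureTheory Set ENNReal

noncomputable section

/-- The half-open axis-parallel cube with corner `a` and side length `l`. -/
def Cube (n : ℕ) (a : Fin n → ℝ) (l : ℝ) : Set (Fin n → ℝ) :=
  Set.univ.pi fun i => Set.Ico (a i) (a i + l)

/-- The uncentered Hardy–Littlewood maximal function over axis-parallel cubes: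
`Mg(x) = sup_{Q ∋ x} |Q|⁻¹ ∫_Q g`. -/
def MaxFn {n : ℕ} (g : (Fin n → ℝ) → ℝ≥0∞) (x : Fin n → ℝ) : ℝ≥0∞ :=
  ⨆ (a : Fin n → ℝ) (l : ℝ) (_ : 0 < l) (_ : x ∈ Cube n a l),
    (volume (Cube n a l))⁻¹ * ∫⁻ y in Cube n a l, g y

/-- The cube of the sparse family `S` with parameters `k, N`:
`[0, 2^{-N})^n` for `k = 0` and `[2^k, 2^k + 2^{-N})^n` for `k ≥ 1`. -/
def sCube (n k N : ℕ) : Set (Fin n → ℝ) :=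
  Cube n (fun _ => if k = 0 then 0 else (2:ℝ)^k) ((2:ℝ)^(-(N:ℤ)))

/-- The sparse operator `T_S g = Σ_{Q ∈ S} (|Q|⁻¹ ∫_Q g) 1_Q`. -/
def TS {n : ℕ} (g : (Fin n → ℝ) → ℝ≥0∞) (x : Fin n → ℝ) : ℝ≥0∞ :=
  ∑' q : ℕ × ℕ,
    (sCube n q.1 q.2).indicator
      (fun _ => (volume (sCube n q.1 q.2))⁻¹ * ∫⁻ y in sCube n q.1 q.2, g y) x

/-- The `j`-th digit (for `j ≥ 1`) of `t ∈ [0,1)` in base `2^k`, using the expansion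
which is not eventually constant `2^k - 1`. -/
def digit (k j : ℕ) (t : ℝ) : ℤ := ⌊t * 2^(k*j)⌋ % 2^k

/-- `Ω_m(k) ⊆ [0,1)^n`: the points all of whose coordinates have base-`2^k` digits
in `{0, …, 2^{k-1}-1}` for `1 ≤ j ≤ m-1`, with `m`-th digit equal to `2^{k-1}`. -/
def Omega (n k m : ℕ) : Set (Fin n → ℝ) :=
  {x | (∀ i, x i ∈ Set.Ico (0:ℝ) 1) ∧
    ∀ i, (∀ j, 1 ≤ j → j < m → digit k j (x i) < 2^(k-1)) ∧
      digit k m (x i) = 2^(k-1)}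

/-- The weight `w_k = Σ_{m ≥ 1} (2^{kn}/(2^{(k-1)n}+1))^m 1_{Ω_m(k)}`. -/
def wk (n k : ℕ) : (Fin n → ℝ) → ℝ≥0∞ := fun x =>
  ∑' m : ℕ,
    (Omega n k (m+1)).indicator
      (fun _ => ((2:ℝ≥0∞)^(k*n) / ((2:ℝ≥0∞)^((k-1)*n) + 1))^(m+1)) x

/-- `Q_1^m(k) = [2^{-k(m-1)-1}, 2^{-k(m-1)-1} + 2^{-km})^n`. -/
def Q1 (n k m : ℕ) : Set (Fin n → ℝ) :=
  Cube n (fun _ => (2:ℝ)^(-(k*(m-1) : ℤ) - 1)) ((2:ℝ)^(-(k*m : ℤ)))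

/-- `Γ(k) = ⋃_{m ≥ 3} Q_1^m(k)`. -/
def Gamma (n k : ℕ) : Set (Fin n → ℝ) := ⋃ m : ℕ, Q1 n k (m+3)

/-- `A_k = 2^{(k-1)n} (2^{(k-1)n}+1)^2`. -/
def Ak (n k : ℕ) : ℝ≥0∞ := 2^((k-1)*n) * (2^((k-1)*n) + 1)^2

/-- The weight `w(x) = Σ_{k ≥ 3} A_k w_k(x - 2⃗^k) 1_{Γ(k)}(x - 2⃗^k)`. -/
def bigW (n : ℕ) : (Fin n → ℝ) → ℝ≥0∞ := fun x =>
  ∑' k : ℕ,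
    (Gamma n (k+3)).indicator (fun z => Ak n (k+3) * wk n (k+3) z)
      (fun i => x i - (2:ℝ)^(k+3))

/-- The test function `f(x) = Σ_{k ≥ 3} k^{-ε} A_k w_k(x - 2⃗^k)`. -/
def bigF (n : ℕ) (ε : ℝ) : (Fin n → ℝ) → ℝ≥0∞ := fun x =>
  ∑' k : ℕ,
    ((k+3 : ℝ≥0∞) ^ (-ε)) * Ak n (k+3) * wk n (k+3) (fun i => x i - (2:ℝ)^(k+3))

/-- `T` is bounded from `L^p(v)` to `L^p(u)` (for nonnegative functions, which are
required to be supported in `supp v`): there is a finite constant `C` with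
`‖Tf‖_{L^p(u)} ≤ C ‖f‖_{L^p(v)}` for all `f ∈ L^p(v)`. -/
def BddOn {n : ℕ} (T : ((Fin n → ℝ) → ℝ≥0∞) → (Fin n → ℝ) → ℝ≥0∞)
    (p : ℝ) (v u : (Fin n → ℝ) → ℝ≥0∞) : Prop :=
  ∃ C : ℝ≥0∞, C ≠ ∞ ∧ ∀ f : (Fin n → ℝ) → ℝ≥0∞, Measurable f →
    (∀ x, v x = 0 → f x = 0) → (∫⁻ x, f x ^ p * v x) < ∞ →
    ∫⁻ x, T f x ^ p * u x ≤ C ^ p * ∫⁻ x, f x ^ p * v x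

/-- The dual weight `u^{1-p'} 1_{supp u}`. -/
def dualW {n : ℕ} (u : (Fin n → ℝ) → ℝ≥0∞) (q : ℝ) : (Fin n → ℝ) → ℝ≥0∞ :=
  fun x => if u x = 0 then 0 else u x ^ (1 - q)

/-!
Let `W` be the `1`-periodic extension of `w_k`, let `b = 2^{(k-1)n}` and `c = 2^{kn} / (b + 1)`.
Shifting digits gives `W(x) = c W(2^k x)` for `x ∈ [0, 1/2)^n`, so dilating a subset of
`[0, 1/2)^n` by `2^k` multiplies its `W`-mass by `b + 1`. Applying `i` dilations to
`[0, 2^{-j-k(i-1)})^n` gives `[0, 2^{k-j})^n`, which consists of `2^{(k-j)n}` unit cubes, while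
`i - 1` dilations take `Q_1^i(k)` to `Q_1^1(k)`, where `W = c`. A unit cube has mass `1`: the parts
`Ω_m(k)` contribute the geometric series `∑ (b + 1)⁻¹ (b / (b + 1))^{m-1}`.
-/

section

variable {n k : ℕ} {t : ℝ}

lemma intCast_two_pow_pred (hk : k ≠ 0) : ((2 ^ (k - 1) : ℤ) : ℝ) = 2⁻¹ * 2 ^ k := by
  rw [← mul_pow_sub_one hk (2 : ℝ), inv_mul_cancel_left₀ two_ne_zero]
  push_cast
  rfl

lemma two_pow_mul_inv_two_pow (a : ℕ) : (2 : ℝ≥0∞) ^ a * 2⁻¹ ^ a = 1 := by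
  rw [← mul_pow, ENNReal.mul_inv_cancel two_ne_zero ofNat_ne_top, one_pow]

lemma two_pow_div_mul_inv_two_pow (k n : ℕ) (s : ℝ≥0∞) :
    2 ^ (k * n) / s * (2⁻¹ ^ k) ^ n = s⁻¹ := by
  rw [div_eq_mul_inv, mul_right_comm, ← pow_mul, two_pow_mul_inv_two_pow, one_mul]

lemma ofReal_inv_two_pow (a : ℕ) : ENNReal.ofReal ((2 : ℝ) ^ a)⁻¹ = 2⁻¹ ^ a := by
  rw [← inv_pow, ENNReal.ofReal_pow (by positivity), ENNReal.ofReal_inv_of_pos two_pos,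
    ENNReal.ofReal_ofNat]

lemma tsum_mul_inv_add_one_pow {b : ℝ≥0∞} (hb : b ≠ ∞) :
    ∑' m : ℕ, (b * (b + 1)⁻¹) ^ m = b + 1 := by
  have hpos : b + 1 ≠ 0 := by simp
  have hsum : 1 = (b + 1)⁻¹ + b * (b + 1)⁻¹ := by
    rw [← one_add_mul, add_comm 1 b, ENNReal.mul_inv_cancel hpos (by simp [hb])]
  rw [ENNReal.tsum_geometric, ENNReal.sub_eq_of_eq_add
    (ENNReal.mul_ne_top hb (ENNReal.inv_ne_top.2 hpos)) hsum, inv_inv]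

lemma preimage_mul_subset_Ico {a b : ℝ} (ha : 1 ≤ a) (hb : 0 ≤ b) {J : Set ℝ}
    (hJ : J ⊆ Ico 0 b) : (fun t => a * t) ⁻¹' J ⊆ Ico 0 b := by
  refine (preimage_mono hJ).trans ?_
  rw [preimage_const_mul_Ico₀ _ _ (by positivity), zero_div]
  exact Ico_subset_Ico_right (div_le_self hb ha)

lemma preimage_two_pow_mul_Ico (hk : k ≠ 0) :
    (fun t : ℝ => 2 ^ k * t) ⁻¹' Ico 0 (2 ^ (k - 1)) = Ico 0 2⁻¹ := by
  rw [preimage_const_mul_Ico₀ _ _ (by positivity), zero_div, ← mul_pow_sub_one hk (2 : ℝ),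
    div_mul_cancel_right₀ (by positivity)]

lemma volume_preimage_two_pow_mul (k : ℕ) (S : Set ℝ) :
    volume ((fun t : ℝ => 2 ^ k * t) ⁻¹' S) = 2⁻¹ ^ k * volume S := by
  rw [Real.volume_preimage_mul_left (by positivity), abs_of_pos (by positivity),
    ofReal_inv_two_pow]

lemma measurable_digit (k j : ℕ) : Measurable (digit k j) :=
  (measurable_from_top (f := fun z : ℤ => z % 2 ^ k)).comp
    (Int.measurable_floor.comp (measurable_id.mul_const _))

lemma digit_succ (k j : ℕ) (t : ℝ) : digit k (j + 1) t = digit k j (2 ^ k * t) := by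
  unfold digit
  congr 2
  ring

lemma digit_succ_intCast_add (k j : ℕ) (c : ℤ) (t : ℝ) :
    digit k (j + 1) (c + t) = digit k (j + 1) t := by
  have hshift : (c + t) * 2 ^ (k * (j + 1)) =
      t * 2 ^ (k * (j + 1)) + ((c * 2 ^ (k * j) * 2 ^ k : ℤ) : ℝ) := by
    push_cast
    ring
  rw [digit, hshift, Int.floor_add_intCast, Int.add_mul_emod_self_right, digit]

lemma digit_one_eq_floor (ht : t ∈ Ico (0 : ℝ) 1) : digit k 1 t = ⌊t * 2 ^ k⌋ := by
  rw [digit, mul_one]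
  refine Int.emod_eq_of_lt (Int.floor_nonneg.2 (mul_nonneg ht.1 (by positivity))) ?_
  rw [Int.floor_lt]
  push_cast
  exact mul_lt_of_lt_one_left (by positivity) ht.2

lemma digit_one_lt_iff (hk : k ≠ 0) (ht : t ∈ Ico (0 : ℝ) 1) :
    digit k 1 t < 2 ^ (k - 1) ↔ t < 2⁻¹ := by
  rw [digit_one_eq_floor ht, Int.floor_lt, intCast_two_pow_pred hk,
    mul_lt_mul_iff_left₀ (by positivity)]

/-- The real numbers whose base-`2^k` digits after the point are `< 2^{k-1}` at places
`1, …, m - 1` and equal to `2^{k-1}` at place `m`: the one-dimensional factor of `Ω_m(k)`,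
extended to a `1`-periodic subset of `ℝ`. -/
def digitSet (k m : ℕ) : Set ℝ :=
  {t | (∀ j, 1 ≤ j → j < m → digit k j t < 2 ^ (k - 1)) ∧ digit k m t = 2 ^ (k - 1)}

lemma measurableSet_digitSet (k m : ℕ) : MeasurableSet (digitSet k m) := by
  have hdigit (j : ℕ) (A : Set ℤ) : MeasurableSet {t | digit k j t ∈ A} :=
    measurable_digit k j (MeasurableSet.of_discrete (s := A))
  simp only [digitSet, ofPred_and, ofPred_forall]
  exact .inter (.iInter fun j => .iInter fun _ => .iInter fun _ => hdigit j (Iio (2 ^ (k - 1))))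
    (hdigit m {2 ^ (k - 1)})

lemma intCast_add_mem_digitSet_succ {m : ℕ} (c : ℤ) :
    c + t ∈ digitSet k (m + 1) ↔ t ∈ digitSet k (m + 1) := by
  refine and_congr (forall_congr' fun j => forall_congr' fun hj => ?_) ?_
  · obtain ⟨l, rfl⟩ := Nat.exists_eq_add_of_le' hj
    rw [digit_succ_intCast_add]
  · rw [digit_succ_intCast_add]

lemma mem_digitSet_one : t ∈ digitSet k 1 ↔ digit k 1 t = 2 ^ (k - 1) :=
  and_iff_right fun _ hj hj_lt => absurd hj_lt hj.not_gt

lemma mem_digitSet_add_two {m : ℕ} :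
    t ∈ digitSet k (m + 2) ↔ digit k 1 t < 2 ^ (k - 1) ∧ 2 ^ k * t ∈ digitSet k (m + 1) := by
  simp only [digitSet, mem_ofPred_eq, ← digit_succ, ← and_assoc]
  refine and_congr_left fun _ => ⟨fun h => ⟨h 1 le_rfl (by lia), fun j _ hjm =>
    h (j + 1) (by lia) (by lia)⟩, fun ⟨hfirst, hrest⟩ j hj hjm => ?_⟩
  obtain ⟨l, rfl⟩ := Nat.exists_eq_add_of_le' hj
  rcases l.eq_zero_or_pos with rfl | hl
  · exact hfirst
  · exact hrest l hl (by lia)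

lemma digitSet_one_inter_Ico_one (hk : k ≠ 0) :
    digitSet k 1 ∩ Ico 0 1 = Ico (2⁻¹ : ℝ) (2⁻¹ + (2 ^ k)⁻¹) := by
  have hpow : (0 : ℝ) < 2 ^ k := by positivity
  have hinv : ((2 : ℝ) ^ k)⁻¹ ≤ 2⁻¹ :=
    inv_anti₀ two_pos (le_self_pow₀ one_le_two hk)
  have hmem {t : ℝ} (ht : t ∈ Ico (0 : ℝ) 1) :
      t ∈ digitSet k 1 ↔ t ∈ Ico (2⁻¹ : ℝ) (2⁻¹ + (2 ^ k)⁻¹) := by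
    rw [mem_digitSet_one, digit_one_eq_floor ht, Int.floor_eq_iff, intCast_two_pow_pred hk,
      ← inv_mul_cancel₀ hpow.ne', ← add_mul, mul_le_mul_iff_left₀ hpow,
      mul_lt_mul_iff_left₀ hpow, mem_Ico]
  ext t
  refine ⟨fun h => (hmem h.2).1 h.1, fun h => ?_⟩
  have ht : t ∈ Ico (0 : ℝ) 1 := ⟨by linarith [h.1], by linarith [h.2]⟩
  exact ⟨(hmem ht).2 h, ht⟩

lemma digitSet_one_inter_Ico_half (hk : k ≠ 0) : digitSet k 1 ∩ Ico 0 2⁻¹ = ∅ := by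
  refine eq_empty_of_forall_notMem fun t ⟨hdigit, ht⟩ => ?_
  exact ((digit_one_lt_iff hk ⟨ht.1, ht.2.trans (by norm_num)⟩).2 ht.2).ne
    (mem_digitSet_one.1 hdigit)

lemma digitSet_add_two_inter_Ico_one (hk : k ≠ 0) (m : ℕ) :
    digitSet k (m + 2) ∩ Ico 0 1 = digitSet k (m + 2) ∩ Ico 0 2⁻¹ := by
  ext t
  refine and_congr_right fun h => ⟨fun ht => ⟨ht.1, ?_⟩, fun ht => ⟨ht.1, ?_⟩⟩
  · exact (digit_one_lt_iff hk ht).1 (mem_digitSet_add_two.1 h).1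
  · exact ht.2.trans (by norm_num)

lemma volume_digitSet_add_two_inter_preimage (hk : k ≠ 0) (m : ℕ) {J : Set ℝ}
    (hJ : J ⊆ Ico 0 (2 ^ (k - 1))) :
    volume (digitSet k (m + 2) ∩ (fun t => 2 ^ k * t) ⁻¹' J) =
      2⁻¹ ^ k * volume (digitSet k (m + 1) ∩ J) := by
  rw [← volume_preimage_two_pow_mul, preimage_inter]
  congr 1
  ext t
  refine and_congr_left fun ht => mem_digitSet_add_two.trans (and_iff_right ?_)
  have hhalf : t ∈ Ico 0 2⁻¹ := preimage_two_pow_mul_Ico hk ▸ hJ ht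
  exact (digit_one_lt_iff hk ⟨hhalf.1, hhalf.2.trans (by norm_num)⟩).2 hhalf.2

lemma volume_digitSet_succ_inter_Ico_natCast (k m c : ℕ) :
    volume (digitSet k (m + 1) ∩ Ico 0 (c : ℝ)) = c * volume (digitSet k (m + 1) ∩ Ico 0 1) := by
  induction c with
  | zero => simp
  | succ c ih =>
    have htranslate : volume (digitSet k (m + 1) ∩ Ico (c : ℝ) (c + 1)) =
        volume (digitSet k (m + 1) ∩ Ico 0 1) := by
      rw [← measure_preimage_add volume (c : ℝ), preimage_inter, preimage_const_add_Ico, sub_self,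
        add_sub_cancel_left]
      congr 2
      exact Set.ext fun t => intCast_add_mem_digitSet_succ (c : ℤ)
    have hdisj : Disjoint (digitSet k (m + 1) ∩ Ico 0 (c : ℝ))
        (digitSet k (m + 1) ∩ Ico (c : ℝ) (c + 1)) :=
      Ico_disjoint_Ico_same.mono inter_subset_right inter_subset_right
    push_cast
    rw [← Ico_union_Ico_eq_Ico c.cast_nonneg (lt_add_one (c : ℝ)).le, inter_union_distrib_left,
      measure_union hdisj ((measurableSet_digitSet k _).inter measurableSet_Ico), ih, htranslate]
    ring

lemma volume_digitSet_succ_inter_Ico_one (hk : k ≠ 0) (m : ℕ) :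
    volume (digitSet k (m + 1) ∩ Ico 0 1) = 2⁻¹ ^ (k + m) := by
  induction m with
  | zero =>
    rw [digitSet_one_inter_Ico_one hk, Real.volume_Ico, add_sub_cancel_left,
      ofReal_inv_two_pow, add_zero]
  | succ m ih =>
    have hcast : (2 : ℝ) ^ (k - 1) = ((2 ^ (k - 1) : ℕ) : ℝ) := by push_cast; rfl
    rw [digitSet_add_two_inter_Ico_one hk, ← preimage_two_pow_mul_Ico hk,
      volume_digitSet_add_two_inter_preimage hk m Subset.rfl, hcast,
      volume_digitSet_succ_inter_Ico_natCast, ih, ← mul_pow_sub_one hk (2⁻¹ : ℝ≥0∞)]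
    push_cast
    calc (2⁻¹ * 2⁻¹ ^ (k - 1) * (2 ^ (k - 1) * 2⁻¹ ^ (k + m)) : ℝ≥0∞)
        = 2 ^ (k - 1) * 2⁻¹ ^ (k - 1) * 2⁻¹ ^ (k + (m + 1)) := by ring
      _ = 2⁻¹ ^ (k + (m + 1)) := by rw [two_pow_mul_inv_two_pow, one_mul]

lemma Omega_eq_pi (n k m : ℕ) : Omega n k m = univ.pi fun _ => digitSet k m ∩ Ico 0 1 := by
  ext x
  simp only [Omega, digitSet, mem_ofPred_eq, mem_univ_pi, mem_inter_iff, ← forall_and, and_comm]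

lemma measurableSet_Omega (n k m : ℕ) : MeasurableSet (Omega n k m) := by
  rw [Omega_eq_pi]
  exact .univ_pi fun _ => (measurableSet_digitSet k m).inter measurableSet_Ico

/-- The mass of the cube `I × ⋯ × I` under the `1`-periodic extension of `w_k` to `ℝⁿ`, with the
sum defining `w_k` integrated term by term. Passing to the periodic extension makes the
self-similarity of `w_k` a statement about all `I ⊆ [0, 2^{k-1})`. -/
def periodicMass (n k : ℕ) (I : Set ℝ) : ℝ≥0∞ :=
  ∑' m : ℕ, ((2 : ℝ≥0∞) ^ (k * n) / (2 ^ ((k - 1) * n) + 1)) ^ (m + 1) *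
    volume (digitSet k (m + 1) ∩ I) ^ n

lemma lintegral_wk_pi (n k : ℕ) {I : Set ℝ} (hI : I ⊆ Ico 0 1) :
    ∫⁻ x in univ.pi fun _ => I, wk n k x = periodicMass n k I := by
  have hvolume (m : ℕ) : volume (Omega n k m ∩ univ.pi fun _ => I) =
      volume (digitSet k m ∩ I) ^ n := by
    rw [Omega_eq_pi, ← pi_inter_distrib, volume_pi_pi, Finset.prod_const, Finset.card_univ,
      Fintype.card_fin, inter_assoc, inter_eq_right.2 hI]
  unfold wk
  rw [lintegral_tsum fun m =>
    (measurable_const.indicator (measurableSet_Omega n k (m + 1))).aemeasurable]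
  refine tsum_congr fun m => ?_
  rw [lintegral_indicator_const (measurableSet_Omega _ _ _),
    Measure.restrict_apply (measurableSet_Omega _ _ _), hvolume]

lemma periodicMass_preimage_two_pow_mul (hn : n ≠ 0) (hk : k ≠ 0) {J : Set ℝ}
    (hJ : J ⊆ Ico 0 (2 ^ (k - 1))) :
    periodicMass n k ((fun t => 2 ^ k * t) ⁻¹' J) =
      (2 ^ ((k - 1) * n) + 1)⁻¹ * periodicMass n k J := by
  have hsubset : (fun t : ℝ => 2 ^ k * t) ⁻¹' J ⊆ Ico 0 2⁻¹ :=
    preimage_two_pow_mul_Ico hk ▸ preimage_mono hJ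
  have hfirst : digitSet k 1 ∩ (fun t => 2 ^ k * t) ⁻¹' J = ∅ :=
    subset_empty_iff.1 ((inter_subset_inter_right _ hsubset).trans
      (digitSet_one_inter_Ico_half hk).subset)
  rw [periodicMass, tsum_eq_zero_add' ENNReal.summable, hfirst, measure_empty, zero_pow hn,
    mul_zero, zero_add, periodicMass, ← ENNReal.tsum_mul_left]
  refine tsum_congr fun m => ?_
  rw [volume_digitSet_add_two_inter_preimage hk m hJ, mul_pow,
    ← two_pow_div_mul_inv_two_pow k n (2 ^ ((k - 1) * n) + 1)]
  ring

lemma periodicMass_preimage_two_pow_mul_iterate (hn : n ≠ 0) (hk : k ≠ 0) (i : ℕ) {J : Set ℝ}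
    (hJ : J ⊆ Ico 0 (2 ^ (k - 1))) :
    periodicMass n k ((fun t => 2 ^ (k * i) * t) ⁻¹' J) =
      (2 ^ ((k - 1) * n) + 1)⁻¹ ^ i * periodicMass n k J := by
  induction i with
  | zero => simp
  | succ i ih =>
    have hcomp : (fun t : ℝ => 2 ^ (k * (i + 1)) * t) ⁻¹' J =
        (fun t => 2 ^ k * t) ⁻¹' ((fun t => 2 ^ (k * i) * t) ⁻¹' J) := by
      ext t
      simp only [mem_preimage, mul_add_one, pow_add, mul_assoc]
    rw [hcomp, periodicMass_preimage_two_pow_mul hn hk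
      (preimage_mul_subset_Ico (one_le_pow₀ one_le_two) (by positivity) hJ), ih]
    ring

lemma periodicMass_Ico_natCast (n k c : ℕ) :
    periodicMass n k (Ico 0 (c : ℝ)) = c ^ n * periodicMass n k (Ico 0 1) := by
  simp only [periodicMass, volume_digitSet_succ_inter_Ico_natCast, ← ENNReal.tsum_mul_left]
  refine tsum_congr fun m => ?_
  ring

lemma periodicMass_Ico_one (hk : k ≠ 0) (n : ℕ) : periodicMass n k (Ico 0 1) = 1 := by
  set b : ℝ≥0∞ := 2 ^ ((k - 1) * n) with hb
  have hb_top : b ≠ ∞ := ENNReal.pow_ne_top ofNat_ne_top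
  have hterm (m : ℕ) : (2 ^ (k * n) / (b + 1)) ^ (m + 1) * (2⁻¹ ^ (k + m)) ^ n =
      (b + 1)⁻¹ * (b * (b + 1)⁻¹) ^ m := by
    have hratio : 2 ^ (k * n) / (b + 1) * 2⁻¹ ^ n = b * (b + 1)⁻¹ := by
      have hsplit : 2 ^ (k * n) = b * 2 ^ n := by
        rw [hb, ← pow_add, ← add_one_mul, Nat.sub_one_add_one hk]
      rw [hsplit, div_eq_mul_inv, mul_right_comm, mul_assoc b, two_pow_mul_inv_two_pow, mul_one]
    have hregroup (c q : ℝ≥0∞) :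
        c ^ (m + 1) * (q ^ (k + m)) ^ n = c * (q ^ k) ^ n * (c * q ^ n) ^ m := by ring
    rw [hregroup, two_pow_div_mul_inv_two_pow, hratio]
  simp only [periodicMass, volume_digitSet_succ_inter_Ico_one hk, ← hb, hterm]
  rw [ENNReal.tsum_mul_left, tsum_mul_inv_add_one_pow hb_top,
    ENNReal.inv_mul_cancel (by simp) (by simp [hb_top])]

lemma periodicMass_Ico_inv_two (hn : n ≠ 0) (hk : k ≠ 0) :
    periodicMass n k (Ico 2⁻¹ (2⁻¹ + (2 ^ k)⁻¹)) = (2 ^ ((k - 1) * n) + 1)⁻¹ := by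
  have hunit : Ico (2⁻¹ : ℝ) (2⁻¹ + (2 ^ k)⁻¹) = digitSet k 1 ∩ Ico 0 1 :=
    (digitSet_one_inter_Ico_one hk).symm
  have hother (m : ℕ) (hm : m ≠ 0) :
      digitSet k (m + 1) ∩ Ico 2⁻¹ (2⁻¹ + (2 ^ k)⁻¹) = ∅ := by
    obtain ⟨m, rfl⟩ := Nat.exists_eq_succ_of_ne_zero hm
    refine eq_empty_of_forall_notMem fun t ⟨hdigit, ht⟩ => ht.1.not_gt ?_
    have hmem : t ∈ digitSet k (m + 2) ∩ Ico 0 1 := ⟨hdigit, (hunit.subset ht).2⟩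
    rw [digitSet_add_two_inter_Ico_one hk] at hmem
    exact hmem.2.2
  rw [periodicMass, tsum_eq_single 0 fun m hm => by rw [hother m hm]; simp [hn], hunit,
    ← inter_assoc, inter_self, volume_digitSet_succ_inter_Ico_one hk,
    add_zero, zero_add, pow_one, two_pow_div_mul_inv_two_pow]

lemma Cube_zero_two_zpow_neg (n : ℕ) {j : ℕ} (hjk : j ≤ k) (i : ℕ) :
    Cube n (fun _ => 0) (2 ^ (-((j + k * i : ℕ) : ℤ))) =
      univ.pi fun _ => (fun t => 2 ^ (k * (i + 1)) * t) ⁻¹' Ico 0 ((2 ^ (k - j) : ℕ) : ℝ) := by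
  have hexp : k * (i + 1) = (k - j) + (j + k * i) := by lia
  rw [Cube, preimage_const_mul_Ico₀ _ _ (by positivity), zero_div, zero_add, zpow_neg,
    zpow_natCast, Nat.cast_pow, Nat.cast_ofNat, hexp, pow_add _ (k - j),
    div_mul_cancel_left₀ (by positivity)]

lemma Q1_succ (n k i : ℕ) :
    Q1 n k (i + 1) =
      univ.pi fun _ => (fun t => 2 ^ (k * i) * t) ⁻¹' Ico 2⁻¹ (2⁻¹ + (2 ^ k)⁻¹) := by
  have hcorner : (2 : ℝ) ^ (-(k * (((i + 1 : ℕ) : ℤ) - 1)) - 1) = 2⁻¹ / 2 ^ (k * i) := by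
    rw [div_eq_mul_inv, ← mul_inv_rev, ← pow_succ, ← zpow_natCast, ← zpow_neg]
    push_cast
    ring_nf
  have hside : (2 : ℝ) ^ (-(k * ((i + 1 : ℕ) : ℤ))) = (2 ^ k)⁻¹ / 2 ^ (k * i) := by
    rw [div_eq_mul_inv, ← mul_inv_rev, ← pow_add, ← zpow_natCast, ← zpow_neg]
    push_cast
    ring_nf
  rw [Q1, Cube, hcorner, hside, preimage_const_mul_Ico₀ _ _ (by positivity), add_div]

lemma lintegral_wk_corner_cube (hn : n ≠ 0) {j : ℕ} (hj : j ≠ 0) (hjk : j ≤ k) (i : ℕ) :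
    ∫⁻ x in Cube n (fun _ => 0) (2 ^ (-((j + k * i : ℕ) : ℤ))), wk n k x =
      2 ^ ((k - j) * n) * (2 ^ ((k - 1) * n) + 1)⁻¹ ^ (i + 1) := by
  have hk : k ≠ 0 := by lia
  have hJ : Ico 0 ((2 ^ (k - j) : ℕ) : ℝ) ⊆ Ico 0 (2 ^ (k - 1)) := by
    push_cast
    exact Ico_subset_Ico_right (pow_le_pow_right₀ one_le_two (by lia))
  have hunit : (fun t => 2 ^ (k * (i + 1)) * t) ⁻¹' Ico 0 ((2 ^ (k - j) : ℕ) : ℝ) ⊆ Ico 0 1 := by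
    rw [preimage_const_mul_Ico₀ _ _ (by positivity), zero_div, Nat.cast_pow, Nat.cast_ofNat]
    exact Ico_subset_Ico_right
      (div_le_one_of_le₀ (pow_le_pow_right₀ one_le_two (by lia)) (by positivity))
  rw [Cube_zero_two_zpow_neg n hjk, lintegral_wk_pi n k hunit,
    periodicMass_preimage_two_pow_mul_iterate hn hk _ hJ, periodicMass_Ico_natCast,
    periodicMass_Ico_one hk, mul_one, mul_comm, pow_mul _ (k - j) n]
  push_cast
  rfl

lemma lintegral_wk_Q1 (hn : n ≠ 0) (hk : k ≠ 0) (i : ℕ) :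
    ∫⁻ x in Q1 n k (i + 1), wk n k x = (2 ^ ((k - 1) * n) + 1)⁻¹ ^ (i + 1) := by
  have hJ : Ico (2⁻¹ : ℝ) (2⁻¹ + (2 ^ k)⁻¹) ⊆ Ico 0 1 :=
    digitSet_one_inter_Ico_one hk ▸ inter_subset_right
  rw [Q1_succ, lintegral_wk_pi n k
      (preimage_mul_subset_Ico (one_le_pow₀ one_le_two) zero_le_one hJ),
    periodicMass_preimage_two_pow_mul_iterate hn hk i
      (hJ.trans (Ico_subset_Ico_right (one_le_pow₀ one_le_two))),
    periodicMass_Ico_inv_two hn hk, pow_succ]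

end

/-- For `n ≥ 1`, `k ≥ 1`, all `i ≥ 1` and `1 ≤ j ≤ k`:
`∫_{[0,2^{-j-k(i-1)})^n} w_k = 2^{(k-j)n} ∫_{Q_1^i(k)} w_k = 2^{(k-j)n} (2^{(k-1)n}+1)^{-i}`. -/
theorem wk_mass_corner_cubes (n k : ℕ) (hn : 1 ≤ n) (hk : 1 ≤ k)
    (i j : ℕ) (hi : 1 ≤ i) (hj1 : 1 ≤ j) (hjk : j ≤ k) :
    (∫⁻ x in Cube n (fun _ => 0) ((2:ℝ)^(-((j + k*(i-1) : ℕ) : ℤ))), wk n k x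
        = 2^((k-j)*n) * ∫⁻ x in Q1 n k i, wk n k x) ∧
    (∫⁻ x in Cube n (fun _ => 0) ((2:ℝ)^(-((j + k*(i-1) : ℕ) : ℤ))), wk n k x
        = 2^((k-j)*n) * (((2:ℝ≥0∞)^((k-1)*n) + 1)⁻¹)^i) := by
  obtain ⟨i, rfl⟩ := Nat.exists_eq_add_of_le' hi
  rw [Nat.add_sub_cancel, lintegral_wk_Q1 (by lia) (by lia) i, and_self]
  exact lintegral_wk_corner_cube (by lia) (by lia) hjk i
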